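/- Let K be an algebraically closed field of characteristic 0, let V ⊆ (Kˣ)ⁿ be a Kummer generic irreducible variety, and let T ⊆ (Kˣ)ⁿ × (Kˣ)ⁿ be a correspondence torus. Then there exists a unique irreducible variety V' ⊆ (Kˣ)ⁿ such that T induces a toric correspondence between V and V'. -/

import Mathlib

namespace BadFields

variable (K : Type) [Field K]

/-- The divisible hull `⟨A⟩` of a subset `A ⊆ Kˣ`: all `x` with `x ^ k` in the subgroup
generated by `A` for some `k ≥ 1`.  Note that `⟨∅⟩` is exactly the group of roots of unity. -/
def divHull (A : Set Kˣ) : Subgroup Kˣ where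
  carrier := {x | ∃ k : ℕ, k ≠ 0 ∧ x ^ k ∈ Subgroup.closure A}
  one_mem' := ⟨1, one_ne_zero, by simpa using Subgroup.one_mem _⟩
  mul_mem' := by
    rintro x y ⟨k, hk, hx⟩ ⟨l, hl, hy⟩
    refine ⟨k * l, mul_ne_zero hk hl, ?_⟩
    rw [mul_pow]
    exact Subgroup.mul_mem _ (by rw [pow_mul]; exact Subgroup.pow_mem _ hx l)
      (by rw [mul_comm k l, pow_mul]; exact Subgroup.pow_mem _ hy k)
  inv_mem' := by
    rintro x ⟨k, hk, hx⟩
    exact ⟨k, hk, by rw [inv_pow]; exact Subgroup.inv_mem _ hx⟩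

/-- A subgroup `U` of `Kˣ` is divisible if every element has `k`-th roots in `U` for all
`k ≥ 1`. -/
def DivisibleSub (U : Subgroup Kˣ) : Prop :=
  ∀ u ∈ U, ∀ k : ℕ, k ≠ 0 → ∃ v ∈ U, v ^ k = u

/-- The lattice of multiplicative relations of the tuple `y` modulo the divisible hull of `A`.
Since `Kˣ/⟨A⟩` is torsion-free, this lattice is saturated, and the dimension of the
`ℚ`-subspace of `Kˣ/Tor` spanned by (the images of) `y` over (the image of) `A` equals
`n` minus the rank of this lattice. -/
def relLattice (A : Set Kˣ) {n : ℕ} (y : Fin n → Kˣ) : Submodule ℤ (Fin n → ℤ) where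
  carrier := {c | (∏ i, y i ^ c i) ∈ divHull K A}
  zero_mem' := by simpa using Subgroup.one_mem _
  add_mem' := by
    intro c d hc hd
    have h : (∏ i, y i ^ (c + d) i) = (∏ i, y i ^ c i) * ∏ i, y i ^ d i := by
      rw [← Finset.prod_mul_distrib]
      exact Finset.prod_congr rfl fun i _ => by rw [Pi.add_apply, zpow_add]
    show (∏ i, y i ^ (c + d) i) ∈ divHull K A
    rw [h]
    exact Subgroup.mul_mem _ hc hd
  smul_mem' := by
    intro m c hc
    have h : (∏ i, y i ^ (m • c) i) = (∏ i, y i ^ c i) ^ m := by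
      rw [← Finset.prod_zpow]
      exact Finset.prod_congr rfl fun i _ => by
        rw [Pi.smul_apply, smul_eq_mul, mul_comm, zpow_mul]
    show (∏ i, y i ^ (m • c) i) ∈ divHull K A
    rw [h]
    exact Subgroup.zpow_mem _ hc m

/-- `ldimRel K A y` is the linear dimension `ldim(y/A)`: the dimension of the `ℚ`-subspace
spanned by the images of the coordinates of `y` in `Kˣ/Tor` over the subspace spanned by the
image of `A`. -/
noncomputable def ldimRel (A : Set Kˣ) {n : ℕ} (y : Fin n → Kˣ) : ℕ :=
  n - Module.finrank ℤ (relLattice K A y)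

/-- The (absolute) linear dimension `ldim(y)`. -/
noncomputable def ldim {n : ℕ} (y : Fin n → Kˣ) : ℕ := ldimRel K ∅ y

/-- `trdegOver K F s` : the transcendence degree over the subfield `F` of the field generated
by `F` and the set `s`, i.e. the maximal cardinality of a finite subset of `s` which is
algebraically independent over `F`. -/
noncomputable def trdegOver (F : Subfield K) (s : Set K) : ℕ :=
  sSup {d | ∃ t : Finset K, ↑t ⊆ s ∧ t.card = d ∧
    AlgebraicIndependent F (fun x : {y : K // y ∈ t} => (x : K))}

/-- Transcendence degree over the prime field; in characteristic zero this is
`trdeg(ℚ(s)/ℚ)`. -/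
noncomputable def trdegQ (s : Set K) : ℕ := trdegOver K ⊥ s

section Var

variable {ι : Type} [Fintype ι]

/-- The subset of the torus `(Kˣ)^ι` cut out by a set of polynomials. -/
def zeroSet (S : Set (MvPolynomial ι K)) : Set (ι → Kˣ) :=
  {x | ∀ p ∈ S, MvPolynomial.eval (fun i => (x i : K)) p = 0}

/-- Zariski closed subsets of the torus `(Kˣ)^ι` (closed subvarieties). -/
def IsZClosed (V : Set (ι → Kˣ)) : Prop := ∃ S, V = zeroSet K S

/-- Zariski closed subsets of `(Kˣ)^ι` defined by polynomials all of whose coefficients lie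
in `E`; for `E = ↑(⊥ : Subfield K)` (the prime field, i.e. `ℚ` in characteristic `0`) this
means defined over `ℚ`. -/
def IsClosedOver (E : Set K) (V : Set (ι → Kˣ)) : Prop :=
  ∃ S : Set (MvPolynomial ι K),
    (∀ p ∈ S, ∀ m, MvPolynomial.coeff m p ∈ E) ∧ V = zeroSet K S

/-- Irreducible (nonempty) Zariski closed subsets of the torus `(Kˣ)^ι`. -/
def IsIrredVar (V : Set (ι → Kˣ)) : Prop :=
  IsZClosed K V ∧ V.Nonempty ∧
    ∀ C₁ C₂ : Set (ι → Kˣ), IsZClosed K C₁ → IsZClosed K C₂ →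
      V ⊆ C₁ ∪ C₂ → V ⊆ C₁ ∨ V ⊆ C₂

/-- The Zariski closure in `(Kˣ)^ι`. -/
def zcl (S : Set (ι → Kˣ)) : Set (ι → Kˣ) := ⋂₀ {C | IsZClosed K C ∧ S ⊆ C}

/-- The locus of a point `b` over the set of constants `E`: the smallest Zariski closed
set containing `b` defined by polynomials with coefficients in `E`. -/
def locusOver (E : Set K) (b : ι → Kˣ) : Set (ι → Kˣ) :=
  ⋂₀ {C | IsClosedOver K E C ∧ b ∈ C}

/-- The dimension of a (not necessarily irreducible) Zariski closed subset of `(Kˣ)^ι`: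
the supremum of the lengths of strict chains of irreducible closed subsets. -/
noncomputable def vdim (V : Set (ι → Kˣ)) : ℕ :=
  sSup {d | ∃ W : Fin (d + 1) → Set (ι → Kˣ),
    (∀ i, IsIrredVar K (W i) ∧ W i ⊆ V) ∧ StrictMono W}

/-- The monomial map `y ↦ y^M` attached to an integer matrix `M`. -/
def mpow {k : ℕ} (M : Matrix (Fin k) ι ℤ) (y : ι → Kˣ) : Fin k → Kˣ :=
  fun j => ∏ i, y i ^ M j i

/-- Algebraic subgroups of the torus `(Kˣ)^ι`: subgroups defined by finitely many monomial
equations `y^M = 1`. -/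
def IsAlgSubgroup (H : Set (ι → Kˣ)) : Prop :=
  ∃ (k : ℕ) (M : Matrix (Fin k) ι ℤ), H = {y | mpow K M y = 1}

/-- Subtori of `(Kˣ)^ι`: irreducible algebraic subgroups. -/
def IsSubtorus (T : Set (ι → Kˣ)) : Prop := IsAlgSubgroup K T ∧ IsIrredVar K T

/-- The coset `c · T` (multiplication coordinatewise). -/
def coset (c : ι → Kˣ) (T : Set (ι → Kˣ)) : Set (ι → Kˣ) := (fun t => c * t) '' T

/-- A variety is free if it is not contained in a coset of a proper subtorus. -/
def IsFree (V : Set (ι → Kˣ)) : Prop :=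
  ¬ ∃ T c, IsSubtorus K T ∧ T ≠ Set.univ ∧ V ⊆ coset K c T

/-- `T` is the minimal torus of `V`: the smallest subtorus such that `V` is contained in some
coset of it. -/
def IsMinTorus (V T : Set (ι → Kˣ)) : Prop :=
  IsSubtorus K T ∧ (∃ c, V ⊆ coset K c T) ∧
    ∀ T', IsSubtorus K T' → (∃ c, V ⊆ coset K c T') → T ⊆ T'

/-- The codimension `cd(V) = dim(minimal torus of V) - dim V`. -/
noncomputable def cd (V : Set (ι → Kˣ)) : ℕ :=
  sInf {d | ∃ T c, IsSubtorus K T ∧ V ⊆ coset K c T ∧ d = vdim K T} - vdim K V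

/-- `S` is cd-maximal in `W`. -/
def CdMaximal (S W : Set (ι → Kˣ)) : Prop :=
  IsIrredVar K S ∧ S ⊆ W ∧
    ∀ S', IsIrredVar K S' → S ⊂ S' → S' ⊆ W → cd K S < cd K S'

/-- `√[m]{V}`, the preimage of `V` under coordinatewise `m`-th powers. -/
def mroot (m : ℕ) (V : Set (ι → Kˣ)) : Set (ι → Kˣ) := {a | (fun i => a i ^ m) ∈ V}

/-- An irreducible variety `V` is Kummer generic if `√[m]{V}` is irreducible for all `m ≥ 1`. -/
def KummerGeneric (V : Set (ι → Kˣ)) : Prop :=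
  IsIrredVar K V ∧ ∀ m : ℕ, 1 ≤ m → IsIrredVar K (mroot K m V)

/-- Irreducible components of a set `S`: maximal irreducible closed subsets of `S`. -/
def IsIrredComponent (V' S : Set (ι → Kˣ)) : Prop :=
  IsIrredVar K V' ∧ V' ⊆ S ∧ ∀ W, IsIrredVar K W → V' ⊆ W → W ⊆ S → W = V'

end Var

/-- A correspondence torus: an `n`-dimensional subtorus of `(Kˣ)ⁿ × (Kˣ)ⁿ` which projects
onto `(Kˣ)ⁿ` in both coordinates.  We identify `(Kˣ)ⁿ × (Kˣ)ⁿ` with `(Kˣ)^(Fin n ⊕ Fin n)`,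
a pair `(x, y)` corresponding to `Sum.elim x y`. -/
def IsCorrTorus {n : ℕ} (T : Set ((Fin n ⊕ Fin n) → Kˣ)) : Prop :=
  IsSubtorus K T ∧ vdim K T = n ∧
    (∀ x : Fin n → Kˣ, ∃ y, Sum.elim x y ∈ T) ∧
    (∀ y : Fin n → Kˣ, ∃ x, Sum.elim x y ∈ T)

/-- `T` induces a toric correspondence between `V` and `V'`: the Zariski closures of the two
projections of `(V × V') ∩ T` are `V` and `V'` respectively. -/
def ToricCorr {n : ℕ} (T : Set ((Fin n ⊕ Fin n) → Kˣ)) (V V' : Set (Fin n → Kˣ)) : Prop :=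
  zcl K ((fun p => p ∘ Sum.inl) '' {p | p ∈ T ∧ (p ∘ Sum.inl) ∈ V ∧ (p ∘ Sum.inr) ∈ V'}) = V ∧
  zcl K ((fun p => p ∘ Sum.inr) '' {p | p ∈ T ∧ (p ∘ Sum.inl) ∈ V ∧ (p ∘ Sum.inr) ∈ V'}) = V'

/-- The set of elements of `K` underlying a set of units. -/
def unitSet (A : Set Kˣ) : Set K := (fun u : Kˣ => (u : K)) '' A

/-- `trdeg(y/A)`, the transcendence degree of `ℚ(A ∪ y)` over `ℚ(A)`. -/
noncomputable def trdegRel (A : Set Kˣ) {n : ℕ} (y : Fin n → Kˣ) : ℕ :=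
  trdegOver K (Subfield.closure (unitSet K A)) (Set.range fun i => (y i : K))

/-- The predimension `δ(y/A) = 2 trdeg(y/A) - ldim(y/A)`. -/
noncomputable def pdelta (A : Set Kˣ) {n : ℕ} (y : Fin n → Kˣ) : ℤ :=
  2 * (trdegRel K A y : ℤ) - (ldimRel K A y : ℤ)

/-- The extension `⟨A ∪ b⟩/A` is minimal prealgebraic of length `n`. -/
def MinPrealg {n : ℕ} (A : Set Kˣ) (b : Fin n → Kˣ) : Prop :=
  2 ≤ n ∧ ldimRel K A b = n ∧ pdelta K A b = 0 ∧
    ∀ B' : Set Kˣ, B' = ↑(divHull K B') → A ⊂ B' → B' ⊂ ↑(divHull K (A ∪ Set.range b)) →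
      pdelta K B' b < 0

/-!
A correspondence torus `T` is the image of `u ↦ (u ^ m, u ^ A)` for some `m ≠ 0` and some integer
matrix `A`: since `T` projects onto the first factor, the equations of `T` can be solved for the
second factor after passing to `m`-th roots of the first, so `T` contains such an image; the image
is closed because the `m`-th power map is (it is finite, so going-up applies), and it has the
dimension of `T`.

If `T` induces a toric correspondence between `V` and `V'`, put
`W = √[m]{V} ∩ {u | u ^ A ∈ V'}`. The `m`-th powers of the closed set `W` are dense in `V`, hence
fill `V`, so that the finitely many translates of `W` by `m`-torsion points cover `√[m]{V}`. As
`√[m]{V}` is irreducible, one translate contains it, and then so does `W`. Thus `V'` has to be the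
closure of `{u ^ A | u ∈ √[m]{V}}`, and this closure does correspond to `V`.
-/

section Preliminaries

open scoped Matrix

theorem exists_mul_eq_of_vecMul {F : Type*} {l m n : Type*} [Field F] [Fintype l] [Fintype m]
    {B : Matrix l m F} {C : Matrix l n F} (h : ∀ c, c ᵥ* B = 0 → c ᵥ* C = 0) :
    ∃ A : Matrix m n F, B * A = C := by
  have hspan (j : n) : LinearMap.proj j ∘ₗ C.vecMulLinear ∈
      Submodule.span F (Set.range fun i ↦ LinearMap.proj i ∘ₗ B.vecMulLinear) := by
    refine mem_span_of_iInf_ker_le_ker fun c hc ↦ ?_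
    have : c ᵥ* B = 0 := funext fun i ↦ by simpa using (Submodule.mem_iInf _).1 hc i
    simp [h c this]
  simp only [Submodule.mem_span_range_iff_exists_fun] at hspan
  choose a ha using hspan
  classical
  refine ⟨.of fun i j ↦ a j i, Matrix.ext fun r j ↦ ?_⟩
  simpa [Matrix.mul_apply, mul_comm] using congr($(ha j) (Pi.single r 1))

theorem exists_mul_eq_smul_of_vecMul {R l m n : Type*} [CommRing R] [IsDomain R] [Fintype l]
    [Fintype m] [Finite n] {B : Matrix l m R} {C : Matrix l n R}
    (h : ∀ c, c ᵥ* B = 0 → c ᵥ* C = 0) :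
    ∃ d : R, d ≠ 0 ∧ ∃ A : Matrix m n R, B * A = d • C := by
  let φ := algebraMap R (FractionRing R)
  have hφ : Function.Injective φ := IsFractionRing.injective R _
  have hker (c : l → FractionRing R) (hc : c ᵥ* B.map φ = 0) : c ᵥ* C.map φ = 0 := by
    obtain ⟨⟨d, hd⟩, hdc⟩ := IsLocalization.exist_integer_multiples_of_finite (nonZeroDivisors R) c
    choose c' hc' using hdc
    have hmap (v : l → R) : φ (c' ⬝ᵥ v) = d • (c ⬝ᵥ φ ∘ v) := by
      rw [RingHom.map_dotProduct, ← smul_dotProduct]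
      exact congr($(funext hc') ⬝ᵥ φ ∘ v)
    have hB : c' ᵥ* B = 0 := funext fun i ↦ hφ <| by
      calc φ (c' ⬝ᵥ B.col i) = d • (c ᵥ* B.map φ) i := hmap (B.col i)
        _ = φ 0 := by simp [hc]
    refine funext fun j ↦ (smul_eq_zero_iff_right (nonZeroDivisors.ne_zero hd)).1 ?_
    calc d • (c ᵥ* C.map φ) j = φ ((c' ᵥ* C) j) := (hmap (C.col j)).symm
      _ = 0 := by simp [h c' hB]
  obtain ⟨A, hA⟩ := exists_mul_eq_of_vecMul hker
  obtain ⟨⟨d, hd⟩, hdA⟩ := IsLocalization.exist_integer_multiples_of_finite (nonZeroDivisors R)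
    fun p : m × n ↦ A p.1 p.2
  choose A' hA' using hdA
  refine ⟨d, nonZeroDivisors.ne_zero hd, .of fun i j ↦ A' (i, j), Matrix.map_injective hφ ?_⟩
  beta_reduce
  have : (Matrix.of fun i j ↦ A' (i, j)).map φ = d • A := Matrix.ext fun i j ↦ hA' (i, j)
  rw [Matrix.map_mul, this, Matrix.mul_smul, hA]
  ext i j
  simp [Algebra.smul_def, φ]

theorem exists_nsmul_add_mul_eq_zero {l m n : Type*} [Fintype l] [Fintype m] [Finite n]
    {B : Matrix l m ℤ} {C : Matrix l n ℤ} (h : ∀ c, c ᵥ* B = 0 → c ᵥ* C = 0) :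
    ∃ d : ℕ, d ≠ 0 ∧ ∃ A : Matrix m n ℤ, d • C + B * A = 0 := by
  obtain ⟨d, hd, A, hA⟩ := exists_mul_eq_smul_of_vecMul h
  obtain ⟨e, rfl | rfl⟩ := d.eq_nat_or_neg
  · exact ⟨e, by simpa using hd, -A, by simp [hA]⟩
  · exact ⟨e, by simpa using hd, A, by simp [hA]⟩

theorem exists_units_pow_ne_one {F : Type*} [Field F] [Infinite F] {m : ℕ} (hm : m ≠ 0) :
    ∃ a : Fˣ, a ^ m ≠ 1 := by
  classical
  obtain ⟨a, ha0, ha⟩ := (Set.finite_singleton (0 : F)).infinite_compl.exists_notMem_finset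
    (Polynomial.nthRoots m 1).toFinset
  refine ⟨Units.mk0 a (by simpa using ha0), fun h ↦ ha ?_⟩
  simpa [Polynomial.mem_nthRoots (Nat.pos_of_ne_zero hm)] using congr_arg Units.val h

theorem exists_subset_of_subset_biUnion_isClosed {X α : Type*} [TopologicalSpace X] {Z : Set X}
    (hZ : IsIrreducible Z) {s : Set α} (hs : s.Finite) {f : α → Set X}
    (hf : ∀ i ∈ s, IsClosed (f i)) (hZf : Z ⊆ ⋃ i ∈ s, f i) : ∃ i ∈ s, Z ⊆ f i := by
  simpa using isIrreducible_iff_sUnion_isClosed.1 hZ (hs.image f).toFinset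
    (by simpa using hf) (by simpa using hZf)

theorem card_le_height_finset {α : Type*} (s : Finset α) : (s.card : ℕ∞) ≤ Order.height s := by
  classical
  induction s using Finset.induction_on with
  | empty => simp
  | insert a s ha ih =>
    calc ((insert a s).card : ℕ∞) = s.card + 1 := by simp [ha]
      _ ≤ Order.height s + 1 := by gcongr
      _ ≤ Order.height (insert a s) := Order.height_add_one_le (Finset.ssubset_insert ha)

end Preliminaries

section Torus

open MvPolynomial Topology TopologicalSpace
open scoped Matrix

variable {K} {ι κ : Type}

/-! ### The Zariski topology -/

/-- The closed point of affine space attached to a point of the torus. -/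
noncomputable def toSpec (x : ι → Kˣ) : PrimeSpectrum (MvPolynomial ι K) :=
  pointToPoint fun i ↦ (x i : K)

/-- The Zariski topology on `(Kˣ)^ι`, as the subspace topology from the prime spectrum of the
polynomial ring. -/
@[reducible]
noncomputable def zariskiTopology : TopologicalSpace (ι → Kˣ) := .induced toSpec inferInstance

attribute [local instance] zariskiTopology

theorem isInducing_toSpec : IsInducing (toSpec : (ι → Kˣ) → _) := ⟨rfl⟩

theorem mem_asIdeal_toSpec {x : ι → Kˣ} {p : MvPolynomial ι K} :
    p ∈ (toSpec x).asIdeal ↔ eval (fun i ↦ (x i : K)) p = 0 := by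
  simp [toSpec, pointToPoint, mem_vanishingIdeal_iff, aeval_eq_eval]

theorem isClosed_iff_isZClosed {V : Set (ι → Kˣ)} : IsClosed V ↔ IsZClosed K V := by
  have preimage_zeroLocus (S : Set (MvPolynomial ι K)) :
      toSpec ⁻¹' PrimeSpectrum.zeroLocus S = zeroSet K S := by
    ext x
    exact forall₂_congr fun p _ ↦ mem_asIdeal_toSpec
  simp [isInducing_toSpec.isClosed_iff, PrimeSpectrum.isClosed_iff_zeroLocus, IsZClosed,
    ← preimage_zeroLocus, eq_comm]

theorem zcl_eq_closure (S : Set (ι → Kˣ)) : zcl K S = closure S := by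
  simp only [zcl, closure, isClosed_iff_isZClosed]

theorem isIrredVar_iff {V : Set (ι → Kˣ)} : IsIrredVar K V ↔ IsIrreducible V ∧ IsClosed V := by
  simp only [IsIrredVar, IsIrreducible, isPreirreducible_iff_isClosed_union_isClosed,
    isClosed_iff_isZClosed]
  tauto

theorem toSpec_injective : Function.Injective (toSpec : (ι → Kˣ) → _) := by
  intro x y hxy
  funext i
  have h : X i - C (x i : K) ∈ (toSpec y).asIdeal := by simp [← hxy, mem_asIdeal_toSpec]
  simpa [mem_asIdeal_toSpec, sub_eq_zero, eq_comm, Units.ext_iff] using h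

/-! ### Regular maps -/

/-- The coordinate ring of the torus `(Kˣ)^ι`, as a ring of functions. -/
def regularFunctions (K ι : Type) [Field K] : Subalgebra K ((ι → Kˣ) → K) :=
  Algebra.adjoin K
    (Set.range (fun i x ↦ (x i : K)) ∪ Set.range fun i x ↦ ((x i)⁻¹ : Kˣ))

theorem exists_mul_prod_pow_eq_eval [Fintype ι] {f : (ι → Kˣ) → K} (hf : f ∈ regularFunctions K ι) :
    ∃ (N : ℕ) (p : MvPolynomial ι K),
      ∀ x, f x * (∏ i, (x i : K)) ^ N = eval (fun i ↦ (x i : K)) p := by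
  classical
  induction hf using Algebra.adjoin_induction with
  | mem f hf =>
    rcases hf with ⟨i, rfl⟩ | ⟨i, rfl⟩
    · exact ⟨0, X i, by simp⟩
    · refine ⟨1, ∏ j ∈ Finset.univ.erase i, X j, fun x ↦ ?_⟩
      simp [← Finset.mul_prod_erase _ _ (Finset.mem_univ i)]
  | algebraMap a => exact ⟨0, C a, by simp⟩
  | add f g _ _ hf hg =>
    obtain ⟨N, p, hp⟩ := hf
    obtain ⟨M, q, hq⟩ := hg
    refine ⟨N + M, p * (∏ i, X i) ^ M + q * (∏ i, X i) ^ N, fun x ↦ ?_⟩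
    simp only [Pi.add_apply, map_add, map_mul, map_pow, map_prod, eval_X, ← hp, ← hq]
    ring
  | mul f g _ _ hf hg =>
    obtain ⟨N, p, hp⟩ := hf
    obtain ⟨M, q, hq⟩ := hg
    refine ⟨N + M, p * q, fun x ↦ ?_⟩
    simp only [Pi.mul_apply, map_mul, ← hp, ← hq]
    ring

theorem isClosed_setOf_eq_zero [Finite ι] {f : (ι → Kˣ) → K} (hf : f ∈ regularFunctions K ι) :
    IsClosed {x | f x = 0} := by
  cases nonempty_fintype ι
  obtain ⟨N, p, hp⟩ := exists_mul_prod_pow_eq_eval hf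
  refine isClosed_iff_isZClosed.2 ⟨{p}, ?_⟩
  ext x
  simp [zeroSet, ← hp, Finset.prod_eq_zero_iff]

/-- Morphisms of tori as varieties (not necessarily homomorphisms): maps whose coordinates are
regular functions. -/
def IsRegularMap (f : (ι → Kˣ) → (κ → Kˣ)) : Prop :=
  ∀ j, (fun x ↦ (f x j : K)) ∈ regularFunctions K ι

theorem eval_comp_mem_regularFunctions {f : (ι → Kˣ) → (κ → Kˣ)} (hf : IsRegularMap f)
    (p : MvPolynomial κ K) : (fun x ↦ eval (fun j ↦ (f x j : K)) p) ∈ regularFunctions K ι := by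
  induction p using MvPolynomial.induction_on with
  | C a => simpa only [eval_C] using! (regularFunctions K ι).algebraMap_mem a
  | add p q hp hq => simpa using! add_mem hp hq
  | mul_X p j hp => simpa using! mul_mem hp (hf j)

theorem IsRegularMap.continuous [Finite ι] {f : (ι → Kˣ) → (κ → Kˣ)} (hf : IsRegularMap f) :
    Continuous f := by
  refine continuous_iff_isClosed.2 fun C hC ↦ ?_
  obtain ⟨S, rfl⟩ := isClosed_iff_isZClosed.1 hC
  have : f ⁻¹' zeroSet K S = ⋂ p ∈ S, {x | eval (fun j ↦ (f x j : K)) p = 0} := by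
    ext x
    simp [zeroSet]
  rw [this]
  exact isClosed_biInter fun p _ ↦ isClosed_setOf_eq_zero (eval_comp_mem_regularFunctions hf p)

theorem IsRegularMap.isClosed_setOf_eq [Finite ι] {f g : (ι → Kˣ) → (κ → Kˣ)}
    (hf : IsRegularMap f) (hg : IsRegularMap g) : IsClosed {x | f x = g x} := by
  have : {x | f x = g x} = ⋂ j, {x | (f x j : K) - g x j = 0} := by
    ext x
    simp [funext_iff, sub_eq_zero, Units.ext_iff]
  rw [this]
  exact isClosed_iInter fun j ↦ isClosed_setOf_eq_zero (sub_mem (hf j) (hg j))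

theorem IsRegularMap.pow {f : (ι → Kˣ) → (κ → Kˣ)} (hf : IsRegularMap f) (m : ℕ) :
    IsRegularMap fun x ↦ f x ^ m :=
  fun j ↦ by simpa using! pow_mem (hf j) m

theorem IsRegularMap.sumElim {ν : Type} {f : (ι → Kˣ) → (κ → Kˣ)} {g : (ι → Kˣ) → (ν → Kˣ)}
    (hf : IsRegularMap f) (hg : IsRegularMap g) : IsRegularMap fun x ↦ Sum.elim (f x) (g x) :=
  Sum.rec hf hg

theorem isRegularMap_const (c : κ → Kˣ) : IsRegularMap fun _ : ι → Kˣ ↦ c :=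
  fun j ↦ (regularFunctions K ι).algebraMap_mem (c j)

theorem isRegularMap_comp_right (e : κ → ι) : IsRegularMap fun x : ι → Kˣ ↦ x ∘ e :=
  fun j ↦ Algebra.subset_adjoin (.inl ⟨e j, rfl⟩)

theorem isRegularMap_const_mul (c : ι → Kˣ) : IsRegularMap fun x ↦ c * x := fun i ↦ by
  simpa using! mul_mem (isRegularMap_const c i) (isRegularMap_comp_right id i)

theorem isRegularMap_mulIndicator (s : Set ι) :
    IsRegularMap (s.mulIndicator : (ι → Kˣ) → ι → Kˣ) := by
  intro i
  by_cases hi : i ∈ s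
  · simpa [hi] using isRegularMap_comp_right id i
  · simpa [hi] using isRegularMap_const 1 i

theorem isRegularMap_mpow_comp [Fintype κ] {k : ℕ} (A : Matrix (Fin k) κ ℤ) (e : κ → ι) :
    IsRegularMap fun x : ι → Kˣ ↦ mpow K A (x ∘ e) := by
  intro j
  have hinv (i : ι) : (fun x : ι → Kˣ ↦ (((x i)⁻¹ : Kˣ) : K)) ∈ regularFunctions K ι :=
    Algebra.subset_adjoin (.inr ⟨i, rfl⟩)
  have hzpow (i : ι) (z : ℤ) : (fun x : ι → Kˣ ↦ ((x i ^ z : Kˣ) : K)) ∈ regularFunctions K ι := by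
    obtain ⟨k, rfl | rfl⟩ := z.eq_nat_or_neg
    · simpa using! pow_mem (isRegularMap_comp_right id i) k
    · convert! pow_mem (hinv i) k using 1
      ext
      simp
  convert! prod_mem fun i (_ : i ∈ Finset.univ) ↦ hzpow (e i) (A j i)
  simp [mpow]

theorem isIrreducible_univ_torus [Infinite K] : IsIrreducible (Set.univ : Set (ι → Kˣ)) := by
  refine ⟨⟨1, trivial⟩, isPreirreducible_iff_isClosed_union_isClosed.2 fun Z₁ Z₂ h₁ h₂ h ↦ ?_⟩
  obtain ⟨S₁, rfl⟩ := isClosed_iff_isZClosed.1 h₁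
  obtain ⟨S₂, rfl⟩ := isClosed_iff_isZClosed.1 h₂
  by_contra! hne
  simp only [Set.not_subset, zeroSet, Set.mem_ofPred_eq, not_forall] at hne
  obtain ⟨⟨x, -, p, hp, hpx⟩, y, -, q, hq, hqy⟩ := hne
  have hpq : p * q = 0 := by
    refine funext_set (fun _ ↦ {0}ᶜ) (fun _ ↦ (Set.finite_singleton 0).infinite_compl) ?_
    intro z hz
    rcases h (Set.mem_univ fun i ↦ Units.mk0 (z i) (hz i trivial)) with hz | hz
    · simpa using .inl (hz p hp)
    · simpa using .inr (hz q hq)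
  rcases mul_eq_zero.1 hpq with rfl | rfl <;> simp_all

theorem IsRegularMap.isIrreducible_range [Infinite K] [Finite ι] {f : (ι → Kˣ) → (κ → Kˣ)}
    (hf : IsRegularMap f) : IsIrreducible (Set.range f) :=
  Set.image_univ ▸ isIrreducible_univ_torus.image f hf.continuous.continuousOn

/-! ### Power maps -/

theorem exists_toSpec_eq [Finite ι] [IsAlgClosed K] {P : PrimeSpectrum (MvPolynomial ι K)}
    (hP : P.asIdeal.IsMaximal) (hX : ∀ i, X i ∉ P.asIdeal) : ∃ x : ι → Kˣ, toSpec x = P := by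
  obtain ⟨z, hz⟩ := isMaximal_iff_eq_vanishingIdeal_singleton.1 hP
  have hz0 (i : ι) : z i ≠ 0 := by simpa [hz, mem_vanishingIdeal_iff] using hX i
  exact ⟨fun i ↦ Units.mk0 (z i) (hz0 i), PrimeSpectrum.ext hz.symm⟩

theorem isIntegral_expand {R : Type*} [CommRing R] {σ : Type*} {m : ℕ} (hm : m ≠ 0) :
    (expand m : MvPolynomial σ R →ₐ[R] MvPolynomial σ R).toRingHom.IsIntegral := by
  intro p
  set f := (expand m : MvPolynomial σ R →ₐ[R] MvPolynomial σ R).toRingHom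
  have hC (a : R) : f (C a) = C a := expand_C m a
  have hX (i : σ) : f (X i) = X i ^ m := expand_X m i
  induction p using MvPolynomial.induction_on with
  | C a => exact hC a ▸ f.isIntegralElem_map
  | add p q hp hq => exact hp.add f hq
  | mul_X p i hp =>
    refine hp.mul f ⟨_, Polynomial.monic_X_pow_sub_C (X i) hm, ?_⟩
    rw [Polynomial.eval₂_sub, Polynomial.eval₂_X_pow, Polynomial.eval₂_C, hX, sub_self]

theorem comap_expand_toSpec (m : ℕ) (x : ι → Kˣ) :
    PrimeSpectrum.comap (expand m).toRingHom (toSpec x) = toSpec (x ^ m) := by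
  ext p
  simp [mem_asIdeal_toSpec, PrimeSpectrum.comap_asIdeal, eval_expand, Pi.pow_def]

theorem isClosedMap_pow [Finite ι] [IsAlgClosed K] {m : ℕ} (hm : m ≠ 0) :
    IsClosedMap fun x : ι → Kˣ ↦ x ^ m := by
  have hint := isIntegral_expand (R := K) (σ := ι) hm
  intro W hW
  obtain ⟨F, hF, rfl⟩ := isInducing_toSpec.isClosed_iff.1 hW
  refine isInducing_toSpec.isClosed_iff.2
    ⟨_, PrimeSpectrum.isClosedMap_comap_of_isIntegral _ hint F hF, ?_⟩
  ext y
  constructor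
  · -- A prime over a maximal ideal under an integral map is maximal, hence a point of affine space.
    rintro ⟨P, hPF, hPy⟩
    have hy : (toSpec y).asIdeal.IsMaximal := by unfold toSpec pointToPoint; infer_instance
    have hP : P.asIdeal.IsMaximal := by
      refine Ideal.isMaximal_of_isIntegral_of_isMaximal_comap' _ hint _ ?_
      rwa [← PrimeSpectrum.comap_asIdeal, hPy]
    have hX (i : ι) : X i ∉ P.asIdeal := by
      intro hi
      have : X i ∈ (toSpec y).asIdeal := by
        rw [← hPy]
        simpa using! P.asIdeal.pow_mem_of_mem hi m (Nat.pos_of_ne_zero hm)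
      simp [mem_asIdeal_toSpec] at this
    obtain ⟨x, rfl⟩ := exists_toSpec_eq hP hX
    exact ⟨x, hPF, toSpec_injective (by rw [← hPy, comap_expand_toSpec])⟩
  · rintro ⟨x, hx, rfl⟩
    exact ⟨toSpec x, hx, comap_expand_toSpec m x⟩

theorem surjective_pow [IsAlgClosed K] {m : ℕ} (hm : m ≠ 0) :
    Function.Surjective fun x : ι → Kˣ ↦ x ^ m := by
  intro y
  choose z hz using fun i ↦ IsAlgClosed.exists_pow_nat_eq (y i : K) (Nat.pos_of_ne_zero hm)
  have hz0 (i : ι) : z i ≠ 0 := by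
    rintro h
    simpa [h, hm, eq_comm] using hz i
  exact ⟨fun i ↦ Units.mk0 (z i) (hz0 i), funext fun i ↦ Units.ext (hz i)⟩

theorem finite_setOf_pow_eq_one [Finite ι] {m : ℕ} (hm : m ≠ 0) :
    {ζ : ι → Kˣ | ζ ^ m = 1}.Finite := by
  have : NeZero m := ⟨hm⟩
  have hroots : {a : Kˣ | a ^ m = 1}.Finite := by
    have : Finite (rootsOfUnity m K) := inferInstance
    exact Set.toFinite (rootsOfUnity m K : Set Kˣ)
  exact (Set.Finite.pi' fun _ : ι ↦ hroots).subset fun ζ hζ i ↦ congr_fun hζ i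

theorem preimage_pow_subset_of_subset_closure [IsAlgClosed K] [Finite ι] {m : ℕ} (hm : m ≠ 0)
    {V W : Set (ι → Kˣ)} (hV : IsIrreducible ((· ^ m) ⁻¹' V)) (hW : IsClosed W)
    (hVW : V ⊆ closure ((· ^ m) '' W)) : (· ^ m) ⁻¹' V ⊆ W := by
  rw [(isClosedMap_pow hm W hW).closure_eq] at hVW
  have hcover : (· ^ m) ⁻¹' V ⊆ ⋃ ζ ∈ {ζ : ι → Kˣ | ζ ^ m = 1}, (ζ * ·) ⁻¹' W := by
    intro x hx
    obtain ⟨w, hw, hwx⟩ := hVW hx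
    exact Set.mem_biUnion (x := w / x) (by simp_all [div_pow]) (by simpa using hw)
  obtain ⟨ζ, hζ, hsub⟩ := exists_subset_of_subset_biUnion_isClosed hV (finite_setOf_pow_eq_one hm)
    (fun ζ _ ↦ hW.preimage (isRegularMap_const_mul ζ).continuous) hcover
  intro x hx
  have : ζ⁻¹ * x ∈ (· ^ m) ⁻¹' V := by simpa [mul_pow, show ζ ^ m = 1 from hζ] using hx
  simpa using hsub this

/-! ### Dimension -/

theorem topologicalKrullDim_torus_le [Finite ι] : topologicalKrullDim (ι → Kˣ) ≤ Nat.card ι := by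
  refine isInducing_toSpec.topologicalKrullDim_le.trans_eq ?_
  rw [PrimeSpectrum.topologicalKrullDim_eq_ringKrullDim,
    MvPolynomial.ringKrullDim_of_isNoetherianRing, ringKrullDim_eq_zero_of_field, zero_add]

theorem exists_chain_iff_le_height (Z : IrreducibleCloseds (ι → Kˣ)) (d : ℕ) :
    (∃ W : Fin (d + 1) → Set (ι → Kˣ), (∀ i, IsIrredVar K (W i) ∧ W i ⊆ Z) ∧ StrictMono W) ↔
      d ≤ Order.height Z := by
  constructor
  · rintro ⟨W, hW, hmono⟩
    let Y (i : Fin (d + 1)) : IrreducibleCloseds (ι → Kˣ) :=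
      ⟨W i, (isIrredVar_iff.1 (hW i).1).1, (isIrredVar_iff.1 (hW i).1).2⟩
    exact Order.length_le_height (p := .mk d Y hmono) (hW (Fin.last d)).2
  · intro hd
    obtain ⟨p, hlast, rfl⟩ := Order.exists_series_of_le_height Z hd
    refine ⟨fun i ↦ p i, fun i ↦ ⟨isIrredVar_iff.2 ⟨(p i).isIrreducible, (p i).isClosed⟩, ?_⟩,
      fun i j hij ↦ p.strictMono hij⟩
    exact hlast ▸ p.monotone (Fin.le_last i)

theorem vdim_eq_height [Finite ι] (Z : IrreducibleCloseds (ι → Kˣ)) :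
    (vdim K (Z : Set (ι → Kˣ)) : ℕ∞) = Order.height Z := by
  have hfin : Order.height Z ≠ ⊤ := by
    intro htop
    have h := (Order.height_le_krullDim Z).trans topologicalKrullDim_torus_le
    rw [htop] at h
    exact absurd (WithBot.coe_le_coe.1 h) (by simp)
  obtain ⟨n, hn⟩ := ENat.ne_top_iff_exists.1 hfin
  have : {d | ∃ W : Fin (d + 1) → Set (ι → Kˣ),
      (∀ i, IsIrredVar K (W i) ∧ W i ⊆ Z) ∧ StrictMono W} = Set.Iic n := by
    ext d
    simp [exists_chain_iff_le_height, ← hn]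
  rw [vdim, this, csSup_Iic, hn]

/-! ### Monomial maps -/

section Monomial

variable [Fintype ι] {k : ℕ}

theorem mpow_add (M N : Matrix (Fin k) ι ℤ) (y : ι → Kˣ) :
    mpow K (M + N) y = mpow K M y * mpow K N y := by
  ext j
  simp only [mpow, Matrix.add_apply, Pi.mul_apply, zpow_add, Finset.prod_mul_distrib]

theorem mpow_mpow {l : ℕ} (M : Matrix (Fin k) (Fin l) ℤ) (N : Matrix (Fin l) ι ℤ) (y : ι → Kˣ) :
    mpow K M (mpow K N y) = mpow K (M * N) y := by
  funext j
  have zpow_sum (a : Kˣ) (f : Fin l → ℤ) : a ^ (∑ r, f r) = ∏ r, a ^ f r :=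
    map_sum (zmultiplesHom (Additive Kˣ) (.ofMul a)) f Finset.univ
  simp only [mpow, Matrix.mul_apply, zpow_sum, ← Finset.prod_zpow, ← zpow_mul]
  rw [Finset.prod_comm]
  simp only [mul_comm]

theorem mpow_pow (M : Matrix (Fin k) ι ℤ) (y : ι → Kˣ) (m : ℕ) :
    mpow K M (y ^ m) = mpow K (m • M) y := by
  funext j
  simp [mpow, zpow_mul]

theorem mpow_sumElim [Fintype κ] (M : Matrix (Fin k) (ι ⊕ κ) ℤ) (x : ι → Kˣ)
    (y : κ → Kˣ) : mpow K M (Sum.elim x y) = mpow K M.toCols₁ x * mpow K M.toCols₂ y := by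
  funext j
  simp [mpow]

theorem mpow_zero_left (y : ι → Kˣ) : mpow K (0 : Matrix (Fin k) ι ℤ) y = 1 := by
  funext j
  simp [mpow]

theorem mpow_one (M : Matrix (Fin k) ι ℤ) : mpow K M 1 = 1 := by
  funext j
  simp [mpow]

theorem eq_zero_of_mpow_eq_one [Infinite K] {M : Matrix (Fin k) ι ℤ}
    (h : ∀ y : ι → Kˣ, mpow K M y = 1) : M = 0 := by
  classical
  ext j i
  by_contra hji
  obtain ⟨a, ha⟩ := exists_units_pow_ne_one (F := K) (Int.natAbs_ne_zero.2 hji)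
  have := congr_fun (h (Pi.mulSingle i a)) j
  rw [mpow, Fintype.prod_eq_single i fun i' hi' ↦ by simp [hi'], Pi.mulSingle_eq_same] at this
  apply ha
  obtain h' | h' := Int.natAbs_eq (M j i) <;> rw [h'] at this <;> simpa using this

theorem vecMul_toCols_eq_zero [Infinite K] {r : ℕ} {M : Matrix (Fin r) (ι ⊕ Fin k) ℤ}
    (hsurj : ∀ x : ι → Kˣ, ∃ y, mpow K M (Sum.elim x y) = 1) (c : Fin r → ℤ)
    (hc : c ᵥ* M.toCols₂ = 0) : c ᵥ* M.toCols₁ = 0 := by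
  let N := Matrix.replicateRow (Fin 1) c
  have hN₂ : (N * M).toCols₂ = 0 := by
    calc N * M.toCols₂ = Matrix.replicateRow (Fin 1) (c ᵥ* M.toCols₂) :=
          (Matrix.replicateRow_vecMul ..).symm
      _ = 0 := by rw [hc, Matrix.replicateRow_zero]
  have hN₁ : (N * M).toCols₁ = 0 := by
    refine eq_zero_of_mpow_eq_one (K := K) fun x ↦ ?_
    obtain ⟨y, hxy⟩ := hsurj x
    calc mpow K (N * M).toCols₁ x = mpow K (N * M) (Sum.elim x y) := by
          rw [mpow_sumElim, hN₂, mpow_zero_left, mul_one]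
      _ = 1 := by rw [← mpow_mpow, hxy, mpow_one]
  rw [← Matrix.replicateRow_eq_zero (ι := Fin 1), Matrix.replicateRow_vecMul]
  exact hN₁

/-! ### Subtori projecting onto the first factor -/

/-- The homomorphism `u ↦ (u ^ m, u ^ A)` of tori. Its image is a subtorus of `(Kˣ)^ι × (Kˣ)^k`
when `m ≠ 0`, and every correspondence torus is such an image. -/
def torusParam (m : ℕ) (A : Matrix (Fin k) ι ℤ) (u : ι → Kˣ) : ι ⊕ Fin k → Kˣ :=
  Sum.elim (u ^ m) (mpow K A u)

theorem isRegularMap_torusParam (m : ℕ) (A : Matrix (Fin k) ι ℤ) :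
    IsRegularMap (torusParam m A : (ι → Kˣ) → _) :=
  ((isRegularMap_comp_right id).pow m).sumElim (isRegularMap_mpow_comp A id)

theorem IsAlgSubgroup.exists_range_torusParam_subset [Infinite K] {T : Set (ι ⊕ Fin k → Kˣ)}
    (hT : IsAlgSubgroup K T) (hsurj : ∀ x, ∃ y, Sum.elim x y ∈ T) :
    ∃ m ≠ 0, ∃ A, Set.range (torusParam m A) ⊆ T := by
  obtain ⟨r, M, rfl⟩ := hT
  obtain ⟨m, hm, A, hA⟩ := exists_nsmul_add_mul_eq_zero (vecMul_toCols_eq_zero hsurj)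
  refine ⟨m, hm, A, ?_⟩
  rintro _ ⟨u, rfl⟩
  calc mpow K M (torusParam m A u) = mpow K (m • M.toCols₁ + M.toCols₂ * A) u := by
        rw [torusParam, mpow_sumElim, mpow_pow, mpow_mpow, mpow_add]
    _ = 1 := by rw [hA, mpow_zero_left]

theorem isClosed_range_torusParam [IsAlgClosed K] {m : ℕ} (hm : m ≠ 0) (A : Matrix (Fin k) ι ℤ) :
    IsClosed (Set.range (torusParam m A : (ι → Kˣ) → _)) := by
  let Γ : Set (ι ⊕ Fin k → Kˣ) := {q | (q ∘ Sum.inr) ^ m = mpow K A (q ∘ Sum.inl)}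
  have hΓ : IsClosed Γ :=
    ((isRegularMap_comp_right _).pow m).isClosed_setOf_eq (isRegularMap_mpow_comp A _)
  convert! isClosedMap_pow hm Γ hΓ
  ext p
  constructor
  · rintro ⟨u, rfl⟩
    obtain ⟨v, hv⟩ := surjective_pow hm (mpow K A u)
    exact ⟨Sum.elim u v, hv, by ext (i | j) <;> simp [torusParam, ← hv]⟩
  · rintro ⟨q, hq, rfl⟩
    refine ⟨q ∘ Sum.inl, ?_⟩
    rw [torusParam, ← hq]
    ext (i | j) <;> simp

/-- The closed subgroup of `(Kˣ)^(ι ⊕ Fin k)` parametrized by the coordinate subtorus `(Kˣ)^s` of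
`(Kˣ)^ι`, consisting of the points whose coordinates outside `s` are `1`. These subgroups provide
the chains that bound the dimension of the image of `torusParam` from below. -/
def coordSubtorus [Infinite K] (m : ℕ) (A : Matrix (Fin k) ι ℤ) (s : Finset ι) :
    IrreducibleCloseds (ι ⊕ Fin k → Kˣ) where
  carrier := closure (torusParam m A '' Set.range (s : Set ι).mulIndicator)
  isIrreducible' := ((isRegularMap_mulIndicator _).isIrreducible_range.image _
    (isRegularMap_torusParam m A).continuous.continuousOn).closure
  isClosed' := isClosed_closure

theorem coordSubtorus_le_iff [Infinite K] {m : ℕ} (hm : m ≠ 0) {A : Matrix (Fin k) ι ℤ}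
    {s t : Finset ι} : coordSubtorus (K := K) m A s ≤ coordSubtorus m A t ↔ s ≤ t := by
  constructor
  · intro h j hjs
    obtain ⟨a, ha⟩ := exists_units_pow_ne_one (F := K) hm
    have hp : torusParam m A ((s : Set ι).mulIndicator fun _ ↦ a) ∈
        closure (torusParam m A '' Set.range (t : Set ι).mulIndicator) :=
      h (subset_closure (Set.mem_image_of_mem _ ⟨_, rfl⟩))
    by_contra hjt
    have hclosed : IsClosed {q : ι ⊕ Fin k → Kˣ | q ∘ (fun _ : Unit ↦ Sum.inl j) = fun _ ↦ 1} :=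
      (isRegularMap_comp_right _).isClosed_setOf_eq (isRegularMap_const 1)
    have := closure_minimal (by rintro _ ⟨_, ⟨u, rfl⟩, rfl⟩; simp [torusParam, hjt, funext_iff])
      hclosed hp
    simp [torusParam, hjs, ha, funext_iff] at this
  · intro hst
    refine closure_mono (Set.image_mono ?_)
    rintro _ ⟨u, rfl⟩
    refine ⟨(s : Set ι).mulIndicator u, ?_⟩
    rw [Set.mulIndicator_mulIndicator, Set.inter_eq_right.2 (Finset.coe_subset.2 hst)]

theorem card_le_height_of_range_torusParam_subset [Infinite K] {m : ℕ} (hm : m ≠ 0)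
    {A : Matrix (Fin k) ι ℤ} {Z : IrreducibleCloseds (ι ⊕ Fin k → Kˣ)}
    (hZ : Set.range (torusParam m A) ⊆ (Z : Set (ι ⊕ Fin k → Kˣ))) :
    (Fintype.card ι : ℕ∞) ≤ Order.height Z :=
  calc (Fintype.card ι : ℕ∞) ≤ Order.height (Finset.univ : Finset ι) :=
        card_le_height_finset _
    _ ≤ Order.height (coordSubtorus m A Finset.univ) :=
        Order.height_le_height_apply_of_strictMono _
          (strictMono_of_le_iff_le fun _ _ ↦ (coordSubtorus_le_iff hm).symm) _
    _ ≤ Order.height Z := Order.height_mono <|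
        closure_minimal ((Set.image_subset_range ..).trans hZ) Z.isClosed

theorem IsSubtorus.exists_eq_range_torusParam [IsAlgClosed K] {T : Set (ι ⊕ Fin k → Kˣ)}
    (hT : IsSubtorus K T) (hdim : vdim K T = Fintype.card ι)
    (hsurj : ∀ x, ∃ y, Sum.elim x y ∈ T) : ∃ m ≠ 0, ∃ A, T = Set.range (torusParam m A) := by
  obtain ⟨m, hm, A, hsub⟩ := hT.1.exists_range_torusParam_subset hsurj
  refine ⟨m, hm, A, (hsub.antisymm ?_).symm⟩
  have hT' := isIrredVar_iff.1 hT.2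
  let R : IrreducibleCloseds (ι ⊕ Fin k → Kˣ) :=
    ⟨_, (isRegularMap_torusParam m A).isIrreducible_range, isClosed_range_torusParam hm A⟩
  let Z : IrreducibleCloseds (ι ⊕ Fin k → Kˣ) := ⟨T, hT'.1, hT'.2⟩
  have hR : (Fintype.card ι : ℕ∞) ≤ Order.height R :=
    card_le_height_of_range_torusParam_subset hm subset_rfl
  have hZ : Order.height Z = Fintype.card ι := by
    rw [← vdim_eq_height]
    exact congrArg _ hdim
  by_contra hne
  have hRZ : R < Z := lt_of_le_not_ge hsub hne
  have := (add_le_add_left hR 1).trans ((Order.height_add_one_le hRZ).trans_eq hZ)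
  exact absurd this (by norm_cast; omega)

end Monomial

/-! ### Toric correspondences -/

theorem toricCorr_range_torusParam_iff [IsAlgClosed K] {n m : ℕ} (hm : m ≠ 0)
    {A : Matrix (Fin n) (Fin n) ℤ} {V V' : Set (Fin n → Kˣ)} (hV : IsClosed V)
    (hVm : IsIrreducible (mroot K m V)) :
    ToricCorr K (Set.range (torusParam m A)) V V' ↔ V' = zcl K (mpow K A '' mroot K m V) := by
  let W : Set (Fin n → Kˣ) := mroot K m V ∩ mpow K A ⁻¹' V'
  have hpts : {p : Fin n ⊕ Fin n → Kˣ | p ∈ Set.range (torusParam m A) ∧ p ∘ Sum.inl ∈ V ∧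
      p ∘ Sum.inr ∈ V'} = torusParam m A '' W := by
    ext p
    constructor
    · rintro ⟨⟨u, rfl⟩, hu⟩
      exact ⟨u, hu, rfl⟩
    · rintro ⟨u, hu, rfl⟩
      exact ⟨⟨u, rfl⟩, hu⟩
  have hcorr : ToricCorr K (Set.range (torusParam m A)) V V' ↔
      closure ((· ^ m) '' W) = V ∧ closure (mpow K A '' W) = V' := by
    simp only [ToricCorr, hpts, Set.image_image, zcl_eq_closure]
    rfl
  rw [hcorr, zcl_eq_closure]
  constructor
  · rintro ⟨h₁, h₂⟩
    have hW : IsClosed W := (hV.preimage ((isRegularMap_comp_right id).pow m).continuous).inter <|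
      (h₂ ▸ isClosed_closure).preimage (isRegularMap_mpow_comp A id).continuous
    have hWm : W = mroot K m V := Set.inter_subset_left.antisymm <|
      preimage_pow_subset_of_subset_closure hm hVm hW h₁.ge
    rw [← hWm, h₂]
  · rintro rfl
    have hWm : W = mroot K m V :=
      Set.inter_eq_left.2 (Set.image_subset_iff.1 subset_closure)
    refine ⟨?_, by rw [hWm]⟩
    rw [hWm]
    exact congrArg closure (Set.image_preimage_eq V (surjective_pow hm)) |>.trans hV.closure_eq

theorem exists_unique_toricCorr_general (K : Type) [Field K] [IsAlgClosed K] {n : ℕ}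
    (V : Set (Fin n → Kˣ)) (hV : KummerGeneric K V) (T : Set ((Fin n ⊕ Fin n) → Kˣ))
    (hT : IsSubtorus K T) (hdim : vdim K T = n) (hsurj : ∀ x : Fin n → Kˣ, ∃ y, Sum.elim x y ∈ T) :
    ∃! V' : Set (Fin n → Kˣ), IsIrredVar K V' ∧ ToricCorr K T V V' := by
  obtain ⟨m, hm, A, rfl⟩ := hT.exists_eq_range_torusParam (by simpa using hdim) hsurj
  have hVm := (isIrredVar_iff.1 (hV.2 m (Nat.one_le_iff_ne_zero.2 hm))).1
  simp only [toricCorr_range_torusParam_iff hm (isIrredVar_iff.1 hV.1).2 hVm]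
  refine ⟨_, ⟨isIrredVar_iff.2 ?_, rfl⟩, fun V' h ↦ h.2⟩
  rw [zcl_eq_closure]
  exact ⟨(hVm.image _ (isRegularMap_mpow_comp A id).continuous.continuousOn).closure,
    isClosed_closure⟩

end Torus

/-- If `V` is Kummer generic and `T` is a correspondence torus, then there
is a unique irreducible variety `V'` such that `T` induces a toric correspondence between
`V` and `V'`. -/
theorem exists_unique_toricCorr
    (K : Type) [Field K] [IsAlgClosed K] [CharZero K]
    {n : ℕ} (V : Set (Fin n → Kˣ)) (hV : KummerGeneric K V)
    (T : Set ((Fin n ⊕ Fin n) → Kˣ)) (hT : IsCorrTorus K T) :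
    ∃! V' : Set (Fin n → Kˣ), IsIrredVar K V' ∧ ToricCorr K T V V' :=
  exists_unique_toricCorr_general K V hV T hT.1 hT.2.1 hT.2.2.1

end BadFields
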